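/- arXiv:2311.07181 — 2 statements merged into one kernel-verified Lean document; each statement's English description precedes it below -/
import Mathlib

section
/- For nonnegative integers n, m with (n,m) ≠ (0,0), the number of noncrossing partitions of [n] into m blocks with no singleton block equals (1/(n−m+1))·C(n,m)·C(n−m−1,m−1). -/
/-- `π` is a partition of `[n] = {1,…,n}`: blocks are nonempty, pairwise disjoint,
and their union is exactly `{1,…,n}`. -/
def IsPartitionOf (n : ℕ) (π : Finset (Finset ℕ)) : Prop :=
  (∀ A ∈ π, A.Nonempty) ∧
  (∀ A ∈ π, ∀ B ∈ π, A ≠ B → Disjoint A B) ∧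
  (∀ x : ℕ, x ∈ Finset.Icc 1 n ↔ ∃ A ∈ π, x ∈ A)

/-- `π` is crossing: two distinct blocks contain `a < c < b < d` with `a,b` in one and
`c,d` in the other. -/
def Crossing (π : Finset (Finset ℕ)) : Prop :=
  ∃ A ∈ π, ∃ B ∈ π, A ≠ B ∧ ∃ a ∈ A, ∃ b ∈ A, ∃ c ∈ B, ∃ d ∈ B,
    a < c ∧ c < b ∧ b < d

/-- Noncrossing partition of `[n]`. -/
def IsNCPartition (n : ℕ) (π : Finset (Finset ℕ)) : Prop :=
  IsPartitionOf n π ∧ ¬ Crossing π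

/-- Replace the singleton blocks `{i}` and `{j}` by the block `{i,j}`. -/
def mergeSingles (π : Finset (Finset ℕ)) (i j : ℕ) : Finset (Finset ℕ) :=
  insert {i, j} ((π.erase {i}).erase {j})

/-- A marriageable singles partition of `[n]`. -/
def IsMarriageable (n : ℕ) (π : Finset (Finset ℕ)) : Prop :=
  IsNCPartition n π ∧ ∃ i j : ℕ, i ≠ j ∧ {i} ∈ π ∧ {j} ∈ π ∧
    IsNCPartition n (mergeSingles π i j)

/-- A lonely singles partition of `[n]`. -/
def IsLonely (n : ℕ) (π : Finset (Finset ℕ)) : Prop :=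
  IsNCPartition n π ∧ ¬ IsMarriageable n π

/-- `C n`: the number of noncrossing partitions of `[n]`. -/
noncomputable def Cnum (n : ℕ) : ℕ := Set.ncard {π : Finset (Finset ℕ) | IsNCPartition n π}

/-- `M n`: the number of marriageable singles partitions of `[n]`. -/
noncomputable def Mnum (n : ℕ) : ℕ := Set.ncard {π : Finset (Finset ℕ) | IsMarriageable n π}

/-- `L n`: the number of lonely singles partitions of `[n]`. -/
noncomputable def Lnum (n : ℕ) : ℕ := Set.ncard {π : Finset (Finset ℕ) | IsLonely n π}

/-- `NCcount n m k`: number of noncrossing partitions of `[n]` into `m` blocks with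
exactly `k` singleton blocks. -/
noncomputable def NCcount (n m k : ℕ) : ℕ :=
  Set.ncard {π : Finset (Finset ℕ) | IsNCPartition n π ∧ π.card = m ∧
    (π.filter fun A => A.card = 1).card = k}

/-- Binomial coefficient on integers, `0` when an argument is negative. -/
def zchoose (a b : ℤ) : ℤ := if 0 ≤ a ∧ 0 ≤ b then (a.toNat).choose b.toNat else 0


/-- compositions of `s` into `m` parts, all at least two -/
def Kc (s m : ℕ) : ℕ := match m with
  | 0 => if s = 0 then 1 else 0
  | m + 1 => if m + 2 ≤ s then (s - m - 2).choose m else 0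

theorem Kc_rec (s m : ℕ) : Kc (s + 2) (m + 1) = Kc (s + 1) (m + 1) + Kc s m := by
  rcases m with _ | m
  · simp only [Kc]; rcases s with _ | s <;> simp
  · simp only [Kc]
    rcases lt_trichotomy s (m + 1) with h | h | h
    · rw [if_neg (by omega), if_neg (by omega), if_neg (by omega)]
    · subst h
      simp
    · obtain ⟨t, rfl⟩ := Nat.exists_eq_add_of_le h
      rw [if_pos (by omega), if_pos (by omega), if_pos (by omega)]
      have e1 : m + 1 + 1 + t + 2 - (m + 1) - 2 = t + 1 := by omega
      have e2 : m + 1 + 1 + t + 1 - (m + 1) - 2 = t := by omega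
      have e3 : m + 1 + 1 + t - m - 2 = t := by omega
      rw [e1, e2, e3, Nat.choose_succ_succ]; ring

theorem Kc_ratio (s m : ℕ) : (m : ℚ) * Kc (s + 1) (m + 1) = ((s : ℚ) - 2 * m) * Kc s m := by
  rcases m with _ | m
  · simp only [Kc]; rcases s with _ | s <;> simp
  · simp only [Kc]
    by_cases h : m + 2 ≤ s
    · obtain ⟨t, rfl⟩ := Nat.exists_eq_add_of_le h
      rw [if_pos (by omega), if_pos (by omega)]
      have e2 : m + 2 + t + 1 - (m + 1) - 2 = t := by omega
      have e3 : m + 2 + t - m - 2 = t := by omega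
      rw [e2, e3]
      have := Nat.choose_succ_right_eq t m
      by_cases hm : m ≤ t
      · have h3 : ((t.choose (m+1) : ℕ) : ℚ) * (m + 1) = t.choose m * ((t : ℚ) - m) := by
          have := congrArg (Nat.cast : ℕ → ℚ) this
          push_cast [Nat.cast_sub hm] at this
          exact this
        push_cast
        linear_combination h3
      · rw [Nat.choose_eq_zero_of_lt (by omega), Nat.choose_eq_zero_of_lt (by omega)]; simp
    · rw [if_neg (by omega), if_neg (by omega)]; simp

/-- recursion for the counts -/
def Fc : ℕ → ℕ → ℕ → ℕ
  | 0, h, m => if h = 0 ∧ m = 0 then 1 else 0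
  | L + 1, h, m => (match h with | 0 => 0 | h + 1 => Fc L h m) +
      (match m with | 0 => 0 | m + 1 => ∑ j ∈ Finset.Ico (h + 1) (L + 1), Fc L j m)

theorem Fc_zero (L : ℕ) : ∀ h m, L < h → Fc L h m = 0 := by
  induction L with
  | zero => intro h m hh; simp [Fc]; omega
  | succ L ih =>
    intro h m hh
    rcases h with _ | h
    · omega
    · rcases m with _ | m
      · simp only [Fc]; rw [ih _ _ (by omega)]
      · simp only [Fc]; rw [ih _ _ (by omega), Finset.Ico_eq_empty (by omega)]; simp

/-- shifted first argument -/
def Fp (L h m : ℕ) : ℕ := match h with | 0 => 0 | h + 1 => Fc L h m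

theorem Fc_succ_succ (L h m : ℕ) : Fc (L + 1) h (m + 1) =
    Fp L h (m + 1) + ∑ j ∈ Finset.Ico (h + 1) (L + 1), Fc L j m := by
  rcases h with _ | h <;> simp only [Fc, Fp]

theorem Fc_formula (L : ℕ) : ∀ s h m, h + s = L →
    (Fc L h m : ℚ) * (L + 1) = (h + 1) * (L + 1).choose m * Kc s m := by
  induction L with
  | zero =>
    intro s h m e
    obtain ⟨rfl, rfl⟩ : h = 0 ∧ s = 0 := by omega
    rcases m with _ | m <;> simp [Fc, Kc]
  | succ L ih =>
    intro s
    induction s with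
    | zero =>
      intro h m e
      obtain rfl : h = L + 1 := by omega
      have := ih 0 L m (by omega)
      have h0 : (L : ℚ) + 1 ≠ 0 := by positivity
      rcases m with _ | m
      · simp [Fc, Kc] at this ⊢
        have : (Fc L L 0 : ℚ) = 1 := by
          apply mul_right_cancel₀ h0; linarith
        rw [this, one_mul]
      · simp [Fc, Kc] at this ⊢
        left; exact_mod_cast this.resolve_right h0
    | succ s ihs =>
      intro h m e
      obtain rfl : L = h + s := by omega
      have h0 : ((h + s : ℕ) : ℚ) + 1 ≠ 0 := by positivity
      rcases m with _ | m
      · rcases h with _ | h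
        · simp [Fc, Kc]
        · have := ih (s + 1) h 0 (by omega)
          simp only [Fc]
          simp [Kc] at this ⊢
          left
          exact_mod_cast this.resolve_right (by exact_mod_cast h0)
      · -- the difference recursion
        have key : Fc (h + s + 1) h (m + 1) + Fc (h + s) h (m + 1) =
            Fp (h + s) h (m + 1) + Fc (h + s) (h + 1) m
              + Fc (h + s + 1) (h + 1) (m + 1) := by
          have hsum : ∑ j ∈ Finset.Ico (h + 1) (h + s + 1), Fc (h + s) j m =
              Fc (h + s) (h + 1) m + ∑ j ∈ Finset.Ico (h + 1 + 1) (h + s + 1), Fc (h + s) j m := by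
            rcases s with _ | s
            · rw [Fc_zero _ _ _ (by omega), Finset.Ico_eq_empty (by omega), Finset.Ico_eq_empty (by omega)]; simp
            · rw [Finset.sum_eq_sum_Ico_succ_bot (by omega)]
          rw [Fc_succ_succ, Fc_succ_succ, hsum]
          simp only [Fp]
          ring
        have k1 : (Fp (h + s) h (m + 1) : ℚ) * ((h + s : ℕ) + 1)
            = h * (h + s + 1).choose (m + 1) * Kc (s + 1) (m + 1) := by
          rcases h with _ | h
          · simp [Fp]
          · have := ih (s + 1) h (m + 1) (by omega)
            simp only [Fp]
            rw [this]; push_cast; ring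
        have k2 := ih s h (m + 1) rfl
        have k3 := ihs (h + 1) (m + 1) (by omega)
        have c1 : ((m : ℚ) + 1) * (h + s + 1 + 1).choose (m + 1) = ((h + s : ℕ) + 2) * (h + s + 1).choose m := by
          have := Nat.add_one_mul_choose_eq (h + s + 1) m
          have := congrArg (Nat.cast : ℕ → ℚ) this
          push_cast at this ⊢
          linear_combination -this
        have c2 : ((m : ℚ) + 1) * (h + s + 1).choose (m + 1) = ((h + s : ℕ) + 1) * (h + s).choose m := by
          have := Nat.add_one_mul_choose_eq (h + s) m
          have := congrArg (Nat.cast : ℕ → ℚ) this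
          push_cast at this ⊢
          linear_combination -this
        have c3 : ((h + s + 1).choose (m + 1) : ℚ) * (m + 1) = (h + s + 1).choose m * ((h + s : ℕ) + 1 - m) := by
          have := Nat.choose_succ_right_eq (h + s + 1) m
          have h3 := congrArg (Nat.cast : ℕ → ℚ) this
          by_cases hm : m ≤ h + s + 1
          · push_cast [Nat.cast_sub hm] at h3 ⊢
            linear_combination h3
          · rw [Nat.choose_eq_zero_of_lt (by omega), Nat.choose_eq_zero_of_lt (by omega)]; simp
        have key' := congrArg (Nat.cast : ℕ → ℚ) key
        rcases s with _ | s
        · -- all boundary terms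
          rw [Fc_zero (h + 0) (h + 1) m (by omega)] at key'
          have z1 : Kc 0 (m + 1) = 0 := by simp [Kc]
          have z2 : Kc (0 + 1) (m + 1) = 0 := by simp [Kc]
          rw [z1] at k2 k3
          rw [z2] at k1 ⊢
          simp only [Nat.cast_zero, mul_zero] at k1 k2 k3 ⊢
          have g1 := (mul_eq_zero.1 k1).resolve_right h0
          have g2 := (mul_eq_zero.1 k2).resolve_right h0
          have g3 := (mul_eq_zero.1 k3).resolve_right (by positivity)
          push_cast at key'
          rw [g1, g2, g3] at key'
          simp at key'
          simp [key']
        · have k4 := ih s (h + 1) m (by omega)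
          have r := Kc_ratio s m
          have kr : (Kc (s + 1 + 1) (m + 1) : ℚ) = Kc (s + 1) (m + 1) + Kc s m := by
            exact_mod_cast Kc_rec s m
          rw [kr] at k1 ⊢
          have hm : (m : ℚ) + 1 ≠ 0 := by positivity
          have h2 : ((h + (s + 1) : ℕ) : ℚ) + 2 ≠ 0 := by positivity
          simp only [Nat.cast_add] at key'
          generalize (Fp (h + (s + 1)) h (m + 1) : ℚ) = M at *
          generalize (Fc (h + (s + 1) + 1) h (m + 1) : ℚ) = a at *
          generalize (Fc (h + (s + 1)) h (m + 1) : ℚ) = b at *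
          generalize (Fc (h + (s + 1)) (h + 1) m : ℚ) = c at *
          generalize (Fc (h + (s + 1) + 1) (h + 1) (m + 1) : ℚ) = d at *
          generalize (Kc (s + 1) (m + 1) : ℚ) = Z at *
          generalize (Kc s m : ℚ) = Y at *
          generalize ((h + (s + 1) + 1).choose m : ℚ) = X at *
          generalize ((h + (s + 1) + 1).choose (m + 1) : ℚ) = B at *
          generalize ((h + (s + 1) + 1 + 1).choose (m + 1) : ℚ) = A at *
          push_cast at *
          have hA : A = (h + (s + 1) + 2) * X / (m + 1) := by field_simp; linear_combination c1
          have hB : B = X * (h + (s + 1) + 1 - m) / (m + 1) := by field_simp; linear_combination c3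
          have eM : M = h * B * (Z + Y) / (h + (s + 1) + 1) := by field_simp; linear_combination k1
          have eb : b = (h + 1) * B * Z / (h + (s + 1) + 1) := by field_simp; linear_combination k2
          have ec : c = (h + 1 + 1) * X * Y / (h + (s + 1) + 1) := by field_simp; linear_combination k4
          have h2' : (h : ℚ) + (s + 1) + 1 + 1 ≠ 0 := by positivity
          have ed : d = (h + 1 + 1) * A * Z / (h + (s + 1) + 1 + 1) := by field_simp; linear_combination k3
          have ea : a = M + c + d - b := by linear_combination key'
          rw [ea, eM, eb, ec, ed, hA, hB]
          field_simp

          linear_combination X * ((h : ℚ) + s + 3) * r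

theorem prop_aux1 {p q r t : Prop} (h : ¬ t) : (p ∨ q ∨ r) ↔ ((q ∨ (¬ t ∧ p)) ∨ r) := by tauto

theorem prop_aux2 {d e r t : Prop} (h : ¬ t) (hs : e → d) :
    (d ∨ r) ↔ ((t ∨ e) ∨ (d ∧ ¬ e) ∨ r) := by tauto

/-- no crossing with `A` first -/
def NCr (A B : Finset ℕ) : Prop :=
  ∀ a ∈ A, ∀ b ∈ A, ∀ c ∈ B, ∀ d ∈ B, a < c → c < b → b < d → False

/-- first block and the other blocks of a noncrossing partition of `Icc a n` -/
structure PP (n a h m : ℕ) (p : Finset ℕ × Finset (Finset ℕ)) : Prop where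
  ha : a ∈ p.1
  hB : p.1.card = h + 1
  hm : p.2.card = m
  h2 : ∀ C ∈ p.2, 2 ≤ C.card
  hd : ∀ C ∈ p.2, Disjoint p.1 C
  hdd : ∀ C ∈ p.2, ∀ D ∈ p.2, C ≠ D → Disjoint C D
  hu : ∀ x, (a ≤ x ∧ x ≤ n) ↔ (x ∈ p.1 ∨ ∃ C ∈ p.2, x ∈ C)
  n1 : ∀ C ∈ p.2, NCr p.1 C
  n2 : ∀ C ∈ p.2, NCr C p.1
  n3 : ∀ C ∈ p.2, ∀ D ∈ p.2, C ≠ D → NCr C D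

open Classical in
/-- the finset of these -/
noncomputable def SS (n a h m : ℕ) : Finset (Finset ℕ × Finset (Finset ℕ)) :=
  ((Finset.Icc a n).powerset ×ˢ (Finset.Icc a n).powerset.powerset).filter (PP n a h m)

theorem mem_SS {n a h m : ℕ} {p} : p ∈ SS n a h m ↔ PP n a h m p := by
  classical
  unfold SS
  rw [Finset.mem_filter]
  constructor
  · exact fun h => h.2
  · intro h
    refine ⟨?_, h⟩
    simp only [Finset.mem_product, Finset.mem_powerset]
    constructor
    · intro x hx
      rw [Finset.mem_Icc]
      exact (h.hu x).2 (Or.inl hx)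
    · intro C hC
      rw [Finset.mem_powerset]
      intro x hx
      rw [Finset.mem_Icc]
      exact (h.hu x).2 (Or.inr ⟨C, hC, hx⟩)

theorem top_exists (D : Finset ℕ) (h : ℕ) (hh : h ≤ D.card) :
    ∃ E ⊆ D, E.card = h ∧ ∀ x ∈ D, x ∉ E → ∀ y ∈ E, x < y := by
  induction h with
  | zero => exact ⟨∅, by simp, by simp, by simp⟩
  | succ h ih =>
    obtain ⟨E, hE, hc, hlt⟩ := ih (by omega)
    have hne : (D \ E).Nonempty := by
      rw [← Finset.card_pos, Finset.card_sdiff_of_subset hE]; omega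
    have hmem := Finset.max'_mem _ hne
    have hmax := Finset.le_max' (D \ E)
    set z := (D \ E).max' hne
    rw [Finset.mem_sdiff] at hmem
    refine ⟨insert z E, ?_, ?_, ?_⟩
    · intro x hx; grind
    · rw [Finset.card_insert_of_notMem hmem.2, hc]
    · intro x hx hxE y hy
      have := hmax x (by grind)
      grind

theorem upper_unique (D E E' : Finset ℕ) (hE : E ⊆ D) (hE' : E' ⊆ D) (hc : E.card = E'.card)
    (h1 : ∀ x ∈ D, x ∉ E → ∀ y ∈ E, x < y) (h2 : ∀ x ∈ D, x ∉ E' → ∀ y ∈ E', x < y) : E = E' := by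
  by_cases h : E ⊆ E'
  · exact Finset.eq_of_subset_of_card_le h hc.ge
  · symm
    apply Finset.eq_of_subset_of_card_le _ hc.le
    obtain ⟨x, hx, hx'⟩ := Finset.not_subset.1 h
    intro y hy
    by_contra hy'
    have a1 := h1 y (hE' hy) hy' x hx
    have a2 := h2 x (hE hx) hx' y hy
    omega

theorem SS_base (n h m : ℕ) : (SS n n h m).card = if h = 0 ∧ m = 0 then 1 else 0 := by
  have key : ∀ p, PP n n h m p → p = ({n}, ∅) ∧ h = 0 ∧ m = 0 := by
    intro ⟨B, σ⟩ hp
    have e1 : B = {n} := by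
      ext x
      rw [Finset.mem_singleton]
      constructor
      · intro hx; have := (hp.hu x).2 (Or.inl hx); omega
      · rintro rfl; exact hp.ha
    have e2 : σ = ∅ := by
      rw [Finset.eq_empty_iff_forall_notMem]
      intro C hC
      have hc := hp.h2 C hC
      obtain ⟨x, hx⟩ : C.Nonempty := by rw [← Finset.card_pos]; omega
      have := (hp.hu x).2 (Or.inr ⟨C, hC, hx⟩)
      have hx2 : x = n := by omega
      subst hx2
      exact Finset.disjoint_left.1 (hp.hd C hC) hp.ha hx
    subst e1 e2
    have := hp.hB
    have := hp.hm
    simp at *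
    omega
  split_ifs with hh
  · obtain ⟨rfl, rfl⟩ := hh
    rw [Finset.card_eq_one]
    refine ⟨({n}, ∅), ?_⟩
    ext p
    rw [mem_SS, Finset.mem_singleton]
    constructor
    · intro hp; exact (key p hp).1
    · rintro rfl
      constructor <;> simp
      intro x; omega
  · rw [Finset.card_eq_zero, Finset.eq_empty_iff_forall_notMem]
    intro p hp
    exact hh (key p (mem_SS.1 hp)).2

theorem SS_gt (n a h m : ℕ) (hh : n < a + h) : SS n a h m = ∅ := by
  rw [Finset.eq_empty_iff_forall_notMem]
  intro p hp
  have hp := mem_SS.1 hp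
  have : p.1 ⊆ Finset.Icc a n := by
    intro x hx; rw [Finset.mem_Icc]; exact (hp.hu x).2 (Or.inl hx)
  have := Finset.card_le_card this
  have := (hp.hu a).2 (Or.inl hp.ha)
  have := hp.hB
  simp at *
  omega

/-- case one: `a + 1` lies in the first block -/
theorem case1 (n a h m : ℕ) (han : a < n) :
    ((SS n a (h + 1) m).filter (fun p => a + 1 ∈ p.1)).card = (SS n (a + 1) h m).card := by
  refine Finset.card_bij' (fun p _ => (p.1.erase a, p.2)) (fun p _ => (insert a p.1, p.2)) ?_ ?_ ?_ ?_
  · rintro ⟨B, σ⟩ hp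
    rw [Finset.mem_filter, mem_SS] at hp
    obtain ⟨hp, h1⟩ := hp
    rw [mem_SS]
    obtain ⟨ha, hB, hm, h2, hd, hdd, hu, n1, n2, n3⟩ := hp
    simp only at *
    refine ⟨by simp [h1], by simp [ha, hB], hm, h2, ?_, hdd, ?_, ?_, ?_, n3⟩
    · intro C hC; exact Finset.disjoint_of_subset_left (Finset.erase_subset _ _) (hd C hC)
    · intro x
      have := hu x
      have hx : ∀ C ∈ σ, x ∈ C → x ≠ a := by
        rintro C hC hx rfl; exact Finset.disjoint_left.1 (hd C hC) ha hx
      simp only [Finset.mem_erase]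
      grind
    · intro C hC x hx y hy
      exact n1 C hC x (Finset.mem_of_mem_erase hx) y (Finset.mem_of_mem_erase hy)
    · intro C hC x hx y hy z hz w hw
      exact n2 C hC x hx y hy z (Finset.mem_of_mem_erase hz) w (Finset.mem_of_mem_erase hw)
  · rintro ⟨B, σ⟩ hp
    rw [mem_SS] at hp
    rw [Finset.mem_filter, mem_SS]
    obtain ⟨ha, hB, hm, h2, hd, hdd, hu, n1, n2, n3⟩ := hp
    simp only at *
    have haB : a ∉ B := fun h => by have := (hu a).2 (Or.inl h); omega
    have haC : ∀ C ∈ σ, ∀ x ∈ C, a + 1 < x := by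
      intro C hC x hx
      have := (hu x).2 (Or.inr ⟨C, hC, hx⟩)
      have : x ≠ a + 1 := by
        rintro rfl; exact Finset.disjoint_left.1 (hd C hC) ha hx
      omega
    refine ⟨⟨by simp, by simp [haB, hB], hm, h2, ?_, hdd, ?_, ?_, ?_, n3⟩, by simp [ha]⟩
    · intro C hC
      simp only [Finset.disjoint_insert_left]
      exact ⟨fun h => by have := haC C hC a h; omega, hd C hC⟩
    · intro x
      have := hu x
      simp only [Finset.mem_insert]
      grind
    · intro C hC x hx y hy z hz w hw l1 l2 l3
      have q := haC C hC z hz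
      simp only [Finset.mem_insert] at hx hy
      replace hy : y ∈ B := hy.resolve_left (by omega)
      rcases hx with rfl | hx
      · exact n1 C hC _ ha y hy z hz w hw (by omega) l2 l3
      · exact n1 C hC x hx y hy z hz w hw l1 l2 l3
    · intro C hC x hx y hy z hz w hw l1 l2 l3
      have q := haC C hC x hx
      simp only [Finset.mem_insert] at hz hw
      exact n2 C hC x hx y hy z (hz.resolve_left (by omega)) w (hw.resolve_left (by omega)) l1 l2 l3
  · rintro ⟨B, σ⟩ hp
    rw [Finset.mem_filter, mem_SS] at hp
    simp [Finset.insert_erase hp.1.ha]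
  · rintro ⟨B, σ⟩ hp
    rw [mem_SS] at hp
    have haB : a ∉ B := fun h => by have := (hp.hu a).2 (Or.inl h); omega
    simp [haB]

/-- merging the first block with the block of `a + 1` -/
theorem case2_fwd (n a h m : ℕ) (B C : Finset ℕ) (σ : Finset (Finset ℕ))
    (hp : PP n a h (m + 1) (B, σ)) (hC : C ∈ σ) (h1 : a + 1 ∈ C) :
    ∃ k, h + 1 ≤ k ∧ PP n (a + 1) k m (C ∪ B.erase a, σ.erase C) ∧
      ∀ x ∈ C, ∀ y ∈ B.erase a, x < y := by
  obtain ⟨ha, hB, hm, h2, hd, hdd, hu, n1, n2, n3⟩ := hp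
  simp only at *
  have hB1 : a + 1 ∉ B := fun h => Finset.disjoint_left.1 (hd C hC) h h1
  have hCB := hd C hC
  have haσ : ∀ G ∈ σ, a ∉ G := fun G hG hh => Finset.disjoint_left.1 (hd G hG) ha hh
  have ge : ∀ G ∈ σ, ∀ x ∈ G, a < x := by
    intro G hG x hx
    have := (hu x).2 (Or.inr ⟨G, hG, hx⟩)
    have : x ≠ a := by rintro rfl; exact haσ G hG hx
    omega
  have geB : ∀ x ∈ B.erase a, a + 1 < x := by
    intro x hx
    rw [Finset.mem_erase] at hx
    have := (hu x).2 (Or.inl hx.2)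
    have : x ≠ a + 1 := by rintro rfl; exact hB1 hx.2
    omega
  have lt : ∀ x ∈ C, ∀ y ∈ B.erase a, x < y := by
    intro x hx y hy
    by_contra hlt
    have : x ≠ y := by
      rintro rfl; exact Finset.disjoint_left.1 hCB (Finset.mem_of_mem_erase hy) hx
    exact n1 C hC a ha y (Finset.mem_of_mem_erase hy) (a + 1) h1 x hx (by omega) (geB y hy) (by omega)
  have geG : ∀ G ∈ σ, G ≠ C → ∀ x ∈ G, a + 1 < x := by
    intro G hG hne x hx
    have := ge G hG x hx
    have : x ≠ a + 1 := by
      rintro rfl; exact Finset.disjoint_left.1 (hdd G hG C hC hne) hx h1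
    omega
  have hdis : Disjoint C (B.erase a) :=
    Finset.disjoint_of_subset_right (Finset.erase_subset _ _) hCB.symm
  have c2 := h2 C hC
  have ceB : (B.erase a).card = h := by simp [ha, hB]
  refine ⟨C.card + h - 1, by omega, ⟨?_, ?_, ?_, ?_, ?_, ?_, ?_, ?_, ?_, ?_⟩, lt⟩
  · simp [h1]
  · simp only
    rw [Finset.card_union_of_disjoint hdis, ceB]; omega
  · simp [hC, hm]
  · intro G hG; exact h2 G (Finset.mem_of_mem_erase hG)
  · intro G hG
    simp only [Finset.mem_erase] at hG
    simp only [Finset.disjoint_union_left]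
    exact ⟨hdd C hC G hG.2 hG.1.symm,
      Finset.disjoint_of_subset_left (Finset.erase_subset _ _) (hd G hG.2)⟩
  · intro G hG G' hG' hne
    exact hdd G (Finset.mem_of_mem_erase hG) G' (Finset.mem_of_mem_erase hG') hne
  · intro x
    have := hu x
    simp only [Finset.mem_erase, Finset.mem_union]
    have hsp : (∃ G ∈ σ, x ∈ G) ↔ (x ∈ C ∨ ∃ G, (G ≠ C ∧ G ∈ σ) ∧ x ∈ G) := by
      constructor
      · rintro ⟨G, hG, hx⟩
        by_cases e : G = C
        · subst e; exact Or.inl hx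
        · exact Or.inr ⟨G, ⟨e, hG⟩, hx⟩
      · rintro (hx | ⟨G, ⟨e, hG⟩, hx⟩)
        · exact ⟨C, hC, hx⟩
        · exact ⟨G, hG, hx⟩
    have hna : (∃ G ∈ σ, x ∈ G) → x ≠ a := by
      rintro ⟨G, hG, hx⟩ rfl; exact haσ G hG hx
    by_cases hxa : x = a
    · subst hxa
      constructor
      · intro; omega
      · intro hh
        exfalso
        apply hna _ rfl
        rw [hsp]
        rcases hh with (hh | hh) | hh
        · exact Or.inl hh
        · exact absurd rfl hh.1
        · exact Or.inr hh
    · have e1 : (a + 1 ≤ x ∧ x ≤ n) ↔ (a ≤ x ∧ x ≤ n) := by omega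
      rw [e1, hu x, hsp]
      exact prop_aux1 hxa
  · intro G hG x hx y hy z hz w hw l1 l2 l3
    simp only [Finset.mem_erase] at hG
    simp only [Finset.mem_union] at hx hy
    rcases hx with hx | hx <;> rcases hy with hy | hy
    · exact n3 C hC G hG.2 hG.1.symm x hx y hy z hz w hw l1 l2 l3
    · exact n1 G hG.2 a ha y (Finset.mem_of_mem_erase hy) z hz w hw (ge G hG.2 z hz) l2 l3
    · have := lt y hy x hx; omega
    · exact n1 G hG.2 x (Finset.mem_of_mem_erase hx) y (Finset.mem_of_mem_erase hy) z hz w hw l1 l2 l3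
  · intro G hG x hx y hy z hz w hw l1 l2 l3
    simp only [Finset.mem_erase] at hG
    simp only [Finset.mem_union] at hz hw
    rcases hz with hz | hz <;> rcases hw with hw | hw
    · exact n3 G hG.2 C hC hG.1 x hx y hy z hz w hw l1 l2 l3
    · exact n3 C hC G hG.2 hG.1.symm (a + 1) h1 z hz x hx y hy (geG G hG.2 hG.1 x hx) l1 l2
    · have := lt w hw z hz; omega
    · exact n2 G hG.2 x hx y hy z (Finset.mem_of_mem_erase hz) w (Finset.mem_of_mem_erase hw) l1 l2 l3
  · intro G hG G' hG' hne
    exact n3 G (Finset.mem_of_mem_erase hG) G' (Finset.mem_of_mem_erase hG') hne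

theorem case2_bwd (n a h k m : ℕ) (han : a < n) (D : Finset ℕ) (τ : Finset (Finset ℕ))
    (hk : h + 1 ≤ k) (hp : PP n (a + 1) k m (D, τ)) (E : Finset ℕ) (hE : E ⊆ D)
    (hc : E.card = h) (hlt : ∀ x ∈ D, x ∉ E → ∀ y ∈ E, x < y) :
    a + 1 ∈ D \ E ∧ a ∉ E ∧ D \ E ∉ τ ∧ PP n a h (m + 1) (insert a E, insert (D \ E) τ) := by
  obtain ⟨ha, hB, hm, h2, hd, hdd, hu, n1, n2, n3⟩ := hp
  simp only at *
  have haD : a ∉ D := fun h => by have := (hu a).2 (Or.inl h); omega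
  have geD : ∀ x ∈ D, a + 1 ≤ x := fun x hx => ((hu x).2 (Or.inl hx)).1
  have hcard : (D \ E).card = k + 1 - h := by rw [Finset.card_sdiff_of_subset hE]; omega
  have hne : (D \ E).Nonempty := by rw [← Finset.card_pos]; omega
  have hlt' : ∀ x ∈ D \ E, ∀ y ∈ E, x < y := by
    intro x hx y hy; rw [Finset.mem_sdiff] at hx; exact hlt x hx.1 hx.2 y hy
  have ha1 : a + 1 ∉ E := by
    intro hh
    obtain ⟨x, hx⟩ := hne
    have := hlt' x hx _ hh
    have := geD x (Finset.mem_sdiff.1 hx).1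
    omega
  have hC1 : a + 1 ∈ D \ E := by simp [ha, ha1]
  have haE : a ∉ E := fun h => haD (hE h)
  have hCτ : D \ E ∉ τ := fun hh =>
    Finset.disjoint_left.1 (hd _ hh) ha hC1
  have geG : ∀ G ∈ τ, ∀ x ∈ G, a + 1 < x := by
    intro G hG x hx
    have := (hu x).2 (Or.inr ⟨G, hG, hx⟩)
    have : x ≠ a + 1 := by rintro rfl; exact Finset.disjoint_left.1 (hd G hG) ha hx
    omega
  have hdisC : ∀ G ∈ τ, Disjoint (D \ E) G := fun G hG =>
    Finset.disjoint_of_subset_left Finset.sdiff_subset (hd G hG)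
  refine ⟨hC1, haE, hCτ, ⟨by simp, by simp [haE, hc], by simp [hCτ, hm], ?_, ?_, ?_, ?_, ?_, ?_, ?_⟩⟩
  · intro G hG
    rcases Finset.mem_insert.1 hG with rfl | hG
    · omega
    · exact h2 G hG
  · intro G hG
    simp only [Finset.disjoint_insert_left]
    rcases Finset.mem_insert.1 hG with rfl | hG
    · exact ⟨by simp [haD], Finset.disjoint_sdiff⟩
    · exact ⟨fun hh => by have := geG G hG a hh; omega, Finset.disjoint_of_subset_left hE (hd G hG)⟩
  · intro G hG G' hG' hne
    rcases Finset.mem_insert.1 hG with rfl | hG <;> rcases Finset.mem_insert.1 hG' with rfl | hG'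
    · exact absurd rfl hne
    · exact hdisC _ hG'
    · exact (hdisC _ hG).symm
    · exact hdd _ hG _ hG' hne
  · intro x
    have := hu x
    simp only [Finset.mem_insert, exists_eq_or_imp, Finset.mem_sdiff]
    have hs := @hE x
    by_cases hxa : x = a
    · subst hxa; simp; omega
    · have e1 : (a ≤ x ∧ x ≤ n) ↔ (a + 1 ≤ x ∧ x ≤ n) := by omega
      rw [e1, this]
      exact prop_aux2 hxa hs
  · intro G hG x hx y hy z hz w hw l1 l2 l3
    simp only [Finset.mem_insert] at hG hx hy
    rcases hG with rfl | hG
    · have := geD z (Finset.mem_sdiff.1 hz).1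
      replace hy := hy.resolve_left (by omega)
      have := hlt' w hw y hy
      omega
    · have := geG G hG z hz
      replace hy := hy.resolve_left (by omega)
      rcases hx with rfl | hx
      · exact n1 G hG _ ha y (hE hy) z hz w hw (by omega) l2 l3
      · exact n1 G hG x (hE hx) y (hE hy) z hz w hw l1 l2 l3
  · intro G hG x hx y hy z hz w hw l1 l2 l3
    simp only [Finset.mem_insert] at hG hz hw
    rcases hG with rfl | hG
    · have := geD x (Finset.mem_sdiff.1 hx).1
      have hz := hz.resolve_left (by omega)
      have := hlt' y hy z hz
      omega
    · have := geG G hG x hx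
      exact n2 G hG x hx y hy z (hE (hz.resolve_left (by omega))) w (hE (hw.resolve_left (by omega))) l1 l2 l3
  · intro G hG G' hG' hne x hx y hy z hz w hw l1 l2 l3
    rcases Finset.mem_insert.1 hG with rfl | hG <;> rcases Finset.mem_insert.1 hG' with rfl | hG'
    · exact absurd rfl hne
    · exact n1 G' hG' x (Finset.mem_sdiff.1 hx).1 y (Finset.mem_sdiff.1 hy).1 z hz w hw l1 l2 l3
    · exact n2 G hG x hx y hy z (Finset.mem_sdiff.1 hz).1 w (Finset.mem_sdiff.1 hw).1 l1 l2 l3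
    · exact n3 G hG G' hG' hne x hx y hy z hz w hw l1 l2 l3

theorem case2 (n a h m L : ℕ) (hL : a + 1 + L = n) :
    ((SS n a h (m + 1)).filter (fun p => a + 1 ∉ p.1)).card =
      ∑ k ∈ Finset.Ico (h + 1) (L + 1), (SS n (a + 1) k m).card := by
  classical
  rw [← Finset.card_biUnion]
  swap
  · intro k _ k' _ hne
    rw [Function.onFun, Finset.disjoint_left]
    intro p hp hp'
    have := (mem_SS.1 hp).hB
    have := (mem_SS.1 hp').hB
    omega
  symm
  have ex : ∀ D : Finset ℕ, ∃ E, h ≤ D.card →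
      (E ⊆ D ∧ E.card = h ∧ ∀ x ∈ D, x ∉ E → ∀ y ∈ E, x < y) := by
    intro D
    by_cases hh : h ≤ D.card
    · obtain ⟨E, h1, h2, h3⟩ := top_exists D h hh
      exact ⟨E, fun _ => ⟨h1, h2, h3⟩⟩
    · exact ⟨∅, fun h => absurd h hh⟩
  choose tp htp using ex
  have bw : ∀ D τ, (D, τ) ∈ (Finset.Ico (h + 1) (L + 1)).biUnion (fun k => SS n (a + 1) k m) →
      tp D ⊆ D ∧
      a + 1 ∈ D \ tp D ∧ a ∉ tp D ∧ D \ tp D ∉ τ ∧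
        PP n a h (m + 1) (insert a (tp D), insert (D \ tp D) τ) := by
    intro D τ hp
    simp only [Finset.mem_biUnion, Finset.mem_Ico, mem_SS] at hp
    obtain ⟨k, hk, hp⟩ := hp
    have hc := hp.hB
    simp only at hc
    obtain ⟨e1, e2, e3⟩ := htp D (by omega)
    exact ⟨e1, case2_bwd n a h k m (by omega) D τ hk.1 hp (tp D) e1 e2 e3⟩
  refine Finset.card_bij (fun p _ => (insert a (tp p.1), insert (p.1 \ tp p.1) p.2)) ?_ ?_ ?_
  · rintro ⟨D, τ⟩ hp
    obtain ⟨_, h1, h2, h3, h4⟩ := bw D τ hp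
    rw [Finset.mem_filter, mem_SS]
    refine ⟨h4, ?_⟩
    rw [Finset.mem_sdiff] at h1
    simp [h1.2]
  · rintro ⟨D, τ⟩ hp ⟨D', τ'⟩ hp' heq
    obtain ⟨s, h1, h2, h3, h4⟩ := bw D τ hp
    obtain ⟨s', h1', h2', h3', h4'⟩ := bw D' τ' hp'
    simp only [Prod.mk.injEq] at heq
    obtain ⟨q1, q2⟩ := heq
    have hE : tp D = tp D' := by
      rw [← Finset.erase_insert h2, ← Finset.erase_insert h2', q1]
    have hC : D \ tp D = D' \ tp D' := by
      by_contra hne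
      have hin : D' \ tp D' ∈ insert (D \ tp D) τ := by rw [q2]; simp
      exact Finset.disjoint_left.1 (h4.hdd _ (Finset.mem_insert_self _ _) _ hin hne) h1 h1'
    have hτ : τ = τ' := by
      rw [← Finset.erase_insert h3, ← Finset.erase_insert h3', q2, hC]
    have hD : D = D' := by
      rw [← Finset.sdiff_union_of_subset s, ← Finset.sdiff_union_of_subset s', hC, hE]
    rw [hD, hτ]
  · rintro ⟨B, σ⟩ hp
    rw [Finset.mem_filter, mem_SS] at hp
    obtain ⟨hp, hB1⟩ := hp
    simp only at hB1
    obtain ⟨C, hC, hC1⟩ := ((hp.hu (a + 1)).1 (by omega)).resolve_left hB1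
    simp only at hC
    obtain ⟨k, hk, hq, hlt⟩ := case2_fwd n a h m B C σ hp hC hC1
    have hkL : k < L + 1 := by
      by_contra hh
      have := SS_gt n (a + 1) k m (by omega)
      have h3 := mem_SS.2 hq
      rw [this] at h3
      simp at h3
    have hmem : (C ∪ B.erase a, σ.erase C) ∈
        (Finset.Ico (h + 1) (L + 1)).biUnion (fun k => SS n (a + 1) k m) := by
      simp only [Finset.mem_biUnion, Finset.mem_Ico, mem_SS]
      exact ⟨k, ⟨hk, hkL⟩, hq⟩
    refine ⟨_, hmem, ?_⟩
    have hc := hq.hB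
    simp only at hc
    obtain ⟨e1, e2, e3⟩ := htp (C ∪ B.erase a) (by omega)
    have hdis : Disjoint C (B.erase a) :=
      Finset.disjoint_of_subset_right (Finset.erase_subset _ _) (hp.hd C hC).symm
    have hcB : (B.erase a).card = h := by
      rw [Finset.card_erase_of_mem hp.ha]; have hb : B.card = h + 1 := hp.hB; exact Nat.sub_eq_of_eq_add hb
    have hE : tp (C ∪ B.erase a) = B.erase a := by
      apply upper_unique _ _ _ e1 Finset.subset_union_right (by omega) e3
      intro x hx hx' y hy
      exact hlt x ((Finset.mem_union.1 hx).resolve_right hx') y hy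
    simp only
    rw [hE, Finset.insert_erase hp.ha, Finset.union_sdiff_cancel_right hdis, Finset.insert_erase hC]

theorem SS_card (n L : ℕ) : ∀ a h m, a + L = n → (SS n a h m).card = Fc L h m := by
  classical
  induction L with
  | zero =>
    intro a h m e
    obtain rfl : a = n := by omega
    rw [SS_base]; rfl
  | succ L ih =>
    intro a h m e
    have split := Finset.card_filter_add_card_filter_not (s := SS n a h m) (fun p => a + 1 ∈ p.1)
    have p1 : ((SS n a h m).filter (fun p => a + 1 ∈ p.1)).card = Fp L h m := by
      rcases h with _ | h
      · simp only [Fp]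
        rw [Finset.card_eq_zero, Finset.filter_eq_empty_iff]
        intro p hp h1
        have hp := mem_SS.1 hp
        have := Finset.card_le_one.1 hp.hB.le _ hp.ha _ h1
        omega
      · rw [case1 n a h m (by omega), ih _ _ _ (by omega)]; rfl
    rw [p1] at split
    rw [← split]
    rcases m with _ | m
    · have : (SS n a h 0).filter (fun p => a + 1 ∉ p.1) = ∅ := by
        rw [Finset.filter_eq_empty_iff]
        intro p hp h1
        have hp := mem_SS.1 hp
        obtain ⟨C, hC, _⟩ := ((hp.hu (a + 1)).1 (by omega)).resolve_left h1
        have := Finset.card_eq_zero.1 hp.hm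
        rw [this] at hC
        simp at hC
      rw [this]
      rcases h with _ | h <;> simp [Fc, Fp]
    · rw [case2 n a h m L (by omega), Fc_succ_succ]
      congr 1
      apply Finset.sum_congr rfl
      intro k _
      exact ih _ _ _ (by omega)

theorem NCcount_eq (n m : ℕ) : NCcount n m 0 = Fc n 0 m := by
  rw [← SS_card n n 0 0 m (by omega), NCcount, ← Set.ncard_coe_finset]
  have hinj : Function.Injective (fun π : Finset (Finset ℕ) => (({0} : Finset ℕ), π)) := by
    intro x y h; simpa using h
  rw [← Set.ncard_image_of_injective _ hinj]
  congr 1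
  ext ⟨B, σ⟩
  simp only [Set.mem_image, Set.mem_ofPred_eq, Finset.mem_coe, mem_SS, Prod.mk.injEq]
  constructor
  · rintro ⟨π, ⟨⟨⟨q1, q2, q3⟩, q4⟩, q5, q6⟩, rfl, rfl⟩
    have pos : ∀ C ∈ π, ∀ x ∈ C, 1 ≤ x ∧ x ≤ n := by
      intro C hC x hx
      exact Finset.mem_Icc.1 ((q3 x).2 ⟨C, hC, hx⟩)
    refine ⟨by simp, by simp, q5, ?_, ?_, q2, ?_, ?_, ?_, ?_⟩
    · intro C hC
      have := Finset.card_pos.2 (q1 C hC)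
      rw [Finset.card_eq_zero, Finset.filter_eq_empty_iff] at q6
      have := q6 hC
      omega
    · intro C hC
      simp only [Finset.disjoint_singleton_left]
      intro h0; have := pos C hC 0 h0; omega
    · intro x
      have := q3 x
      rw [Finset.mem_Icc] at this
      simp only [Finset.mem_singleton]
      rw [← this]
      omega
    · intro C hC x hx y hy z hz w hw l1 l2 l3
      simp only [Finset.mem_singleton] at hx hy
      omega
    · intro C hC x hx y hy z hz w hw l1 l2 l3
      simp only [Finset.mem_singleton] at hz hw
      omega
    · intro C hC D hD hne x hx y hy z hz w hw l1 l2 l3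
      exact q4 ⟨C, hC, D, hD, hne, x, hx, y, hy, z, hz, w, hw, l1, l2, l3⟩
  · intro hp
    obtain ⟨ha, hB, hm, h2, hd, hdd, hu, n1, n2, n3⟩ := hp
    simp only at *
    obtain ⟨z, rfl⟩ := Finset.card_eq_one.1 hB
    obtain rfl : 0 = z := by simpa using ha
    refine ⟨σ, ⟨⟨⟨?_, hdd, ?_⟩, ?_⟩, hm, ?_⟩, rfl, rfl⟩
    · intro C hC; have := h2 C hC; rw [← Finset.card_pos]; omega
    · intro x
      have := hu x
      rw [Finset.mem_Icc]
      rw [Finset.mem_singleton] at this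
      have h0 : (∃ C ∈ σ, x ∈ C) → x ≠ 0 := by
        rintro ⟨C, hC, hx⟩ rfl
        have := hd C hC
        simp at this
        exact this hx
      constructor
      · intro hx
        exact (this.1 ⟨by omega, hx.2⟩).resolve_left (by omega)
      · intro hx
        have := this.2 (Or.inr hx)
        have := h0 hx
        omega
    · rintro ⟨C, hC, D, hD, hne, x, hx, y, hy, z, hz, w, hw, l1, l2, l3⟩
      exact n3 C hC D hD hne x hx y hy z hz w hw l1 l2 l3
    · rw [Finset.card_eq_zero, Finset.filter_eq_empty_iff]
      intro C hC
      have := h2 C hC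
      omega

theorem Kc_zchoose (n m : ℕ) (h : (n, m) ≠ (0, 0)) :
    zchoose ((n : ℤ) - m - 1) ((m : ℤ) - 1) = Kc n m := by
  rcases m with _ | m
  · have : n ≠ 0 := by rintro rfl; exact h rfl
    simp [zchoose, Kc, this]
  · simp only [zchoose, Kc]
    by_cases hh : m + 2 ≤ n
    · rw [if_pos (by push_cast; omega), if_pos hh]
      have e1 : ((n : ℤ) - ((m + 1 : ℕ) : ℤ) - 1).toNat = n - m - 2 := by omega
      have e2 : (((m + 1 : ℕ) : ℤ) - 1).toNat = m := by omega
      rw [e1, e2]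
    · rw [if_neg (by push_cast; omega), if_neg hh]; rfl

theorem stmt11 (n m : ℕ) (h : (n, m) ≠ (0, 0)) :
    (NCcount n m 0 : ℤ) * ((n : ℤ) - m + 1) =
      zchoose n m * zchoose ((n : ℤ) - m - 1) ((m : ℤ) - 1) := by
  rw [Kc_zchoose n m h, NCcount_eq]
  have e : zchoose n m = n.choose m := by simp [zchoose]
  rw [e]
  have f := Fc_formula n n 0 m (by omega)
  have c : ((n + 1).choose m : ℚ) * ((n : ℚ) - m + 1) = (n + 1) * n.choose m := by
    have := Nat.add_one_mul_choose_eq n m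
    have h4 := Nat.choose_succ_right_eq (n + 1) m
    by_cases hm : m ≤ n + 1
    · rw [← this] at h4
      have := congrArg (Nat.cast : ℕ → ℚ) h4
      push_cast [Nat.cast_sub hm] at this
      linear_combination -this
    · rw [Nat.choose_eq_zero_of_lt (by omega), Nat.choose_eq_zero_of_lt (by omega)]; simp
  have h0 : (n : ℚ) + 1 ≠ 0 := by positivity
  have goal : (Fc n 0 m : ℚ) * ((n : ℚ) - m + 1) = n.choose m * Kc n m := by
    apply mul_right_cancel₀ h0
    push_cast at f
    linear_combination ((n : ℚ) - m + 1) * f + (Kc n m : ℚ) * c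
  exact_mod_cast goal
end

section
/- For nonnegative integers n, m with (n,m) ≠ (1,1), the number of noncrossing partitions of [n] into m blocks with exactly one singleton block equals C(n, m−1)·C(n−m−1, m−2). -/
namespace S12
open Finset

/-- Suffix sums are bounded by suffix lengths. -/
def Good : List ℕ → Prop
  | [] => True
  | s :: l => s + l.sum ≤ l.length + 1 ∧ Good l

/-- The finset of good lists with given length and sum. -/
def GLs : ℕ → ℕ → Finset (List ℕ)
  | 0, T => if T = 0 then {[]} else ∅
  | L + 1, T => if T ≤ L + 1 then
      (antidiagonal T).biUnion (fun p => (GLs L p.2).image (List.cons p.1)) else ∅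

lemma mem_GLs (L T : ℕ) (l : List ℕ) : l ∈ GLs L T ↔ l.length = L ∧ l.sum = T ∧ Good l := by
  induction L generalizing T l with
  | zero =>
    simp only [GLs, List.length_eq_zero_iff]
    split_ifs with h
    · subst h
      constructor
      · intro h; simp at h; subst h; simp [Good]
      · rintro ⟨rfl, -⟩; simp
    · constructor
      · simp
      · rintro ⟨rfl, h2, -⟩; simp at h2; omega
  | succ L ih =>
    simp only [GLs]
    split_ifs with h
    · simp only [mem_biUnion, mem_image, ih, HasAntidiagonal.mem_antidiagonal]
      constructor
      · rintro ⟨⟨s, r⟩, hp, l', ⟨h1, h2, h3⟩, rfl⟩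
        simp only at hp h2
        refine ⟨by simp [h1], by simp [h2, hp], ?_, h3⟩
        omega
      · rintro ⟨h1, h2, h3⟩
        cases l with
        | nil => simp at h1
        | cons s l =>
          simp at h1 h2
          exact ⟨(s, l.sum), h2, l, ⟨h1, rfl, h3.2⟩, rfl⟩
    · simp only [notMem_empty, false_iff]
      rintro ⟨h1, h2, h3⟩
      cases l with
      | nil => simp at h1
      | cons s l =>
        simp at h1 h2
        have := h3.1
        omega

variable {R : Type*} [CommRing R]

/-- weighted count -/
def W (w : ℕ → R) (L T : ℕ) : R := ∑ l ∈ GLs L T, (l.map w).prod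

lemma W_succ (w : ℕ → R) (L T : ℕ) (h : T ≤ L + 1) :
    W w (L + 1) T = ∑ p ∈ antidiagonal T, w p.1 * W w L p.2 := by
  unfold W
  rw [GLs, if_pos h, sum_biUnion]
  · refine sum_congr rfl fun p hp => ?_
    rw [sum_image (by intro a _ b _ hab; simpa using hab), mul_sum]
    simp
  · intro p hp q hq hpq
    rw [Function.onFun, disjoint_left]
    intro l h1 h2
    simp only [mem_image] at h1 h2
    obtain ⟨l1, -, rfl⟩ := h1
    obtain ⟨l2, -, h2⟩ := h2
    simp at h2
    apply hpq
    simp at hp hq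
    ext <;> omega

lemma deriv_coeff (f : PowerSeries R) (L T : ℕ) :
    (T : R) * PowerSeries.coeff T (f ^ (L + 2)) =
      (L + 2) * ∑ p ∈ antidiagonal T, ((p.1 : R) * PowerSeries.coeff p.1 f) *
        PowerSeries.coeff p.2 (f ^ (L + 1)) := by
  have key : ∀ (g : PowerSeries R) (k : ℕ), PowerSeries.coeff k (PowerSeries.X * PowerSeries.derivative R g)
      = (k : R) * PowerSeries.coeff k g := by
    intro g k
    cases k with
    | zero => simp
    | succ k => 
      rw [PowerSeries.coeff_succ_X_mul, PowerSeries.coeff_derivative]; push_cast; ring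
  rw [← key]
  have : PowerSeries.X * PowerSeries.derivative R (f ^ (L + 2)) =
      (PowerSeries.C ((L : R) + 2)) * ((PowerSeries.X * PowerSeries.derivative R f) * f ^ (L + 1)) := by
    rw [Derivation.leibniz_pow]
    have h2 : (PowerSeries.C (2 : R)) = 2 := map_ofNat _ 2
    simp [h2]
    ring
  rw [this, PowerSeries.coeff_C_mul, PowerSeries.coeff_mul]
  simp only [key]

lemma W_zero_of_lt (w : ℕ → R) (L T : ℕ) (h : L < T) : W w L T = 0 := by
  unfold W
  cases L with
  | zero => rw [GLs, if_neg (by omega)]; simp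
  | succ L => rw [GLs, if_neg (by omega)]; simp

lemma W_formula [IsDomain R] [CharZero R] (w : ℕ → R) (hw : w 0 = 1) (L T : ℕ) (h : T ≤ L + 1) :
    ((L : R) + 1) * W w L T =
      ((L : R) + 1 - T) * PowerSeries.coeff T ((PowerSeries.mk w) ^ (L + 1)) := by
  induction L generalizing T with
  | zero =>
    interval_cases T
    · simp [W, GLs, hw]
    · simp [W, GLs]
  | succ L ih =>
    by_cases h' : T = L + 2
    · subst h'
      rw [W_zero_of_lt _ _ _ (by omega)]
      push_cast; ring
    have hT : T ≤ L + 1 := by omega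
    rw [W_succ _ _ _ hT]
    have hL : (L : R) + 1 ≠ 0 := by exact_mod_cast Nat.succ_ne_zero L
    apply mul_left_cancel₀ hL
    have e1 : ((L : R) + 1) * ∑ p ∈ antidiagonal T, w p.1 * W w L p.2
        = ((L : R) + 1 - T) * PowerSeries.coeff T ((PowerSeries.mk w) ^ (L + 2)) +
          ∑ p ∈ antidiagonal T, ((p.1 : R) * PowerSeries.coeff p.1 (PowerSeries.mk w)) *
        PowerSeries.coeff p.2 ((PowerSeries.mk w) ^ (L + 1)) := by
      rw [pow_succ' _ (L+1), PowerSeries.coeff_mul, mul_sum, mul_sum, ← sum_add_distrib]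
      refine sum_congr rfl fun p hp => ?_
      rw [HasAntidiagonal.mem_antidiagonal] at hp
      have := ih p.2 (by omega)
      rw [PowerSeries.coeff_mk]
      have hc : (T : R) = p.1 + p.2 := by exact_mod_cast hp.symm
      rw [hc]
      linear_combination w p.1 * this
    have e2 := deriv_coeff (PowerSeries.mk w) L T
    push_cast
    linear_combination ((L : R) + 2) * e1 - e2

end S12

namespace S12
open Finset

lemma coeff_extract {S : Type*} [CommRing S] (f g : PowerSeries S) (N n j : ℕ) :
    (PowerSeries.coeff n ((PowerSeries.C (Polynomial.X : Polynomial S) *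
      PowerSeries.map Polynomial.C f + PowerSeries.map Polynomial.C g) ^ N)).coeff j =
    PowerSeries.coeff n (f ^ j * g ^ (N - j)) * (N.choose j : S) := by
  rw [add_pow]
  have : ∀ i, (PowerSeries.C (Polynomial.X : Polynomial S) * PowerSeries.map Polynomial.C f) ^ i *
      (PowerSeries.map Polynomial.C g) ^ (N - i) * (N.choose i : PowerSeries (Polynomial S)) =
      PowerSeries.C (Polynomial.X ^ i : Polynomial S) *
        (PowerSeries.map Polynomial.C (PowerSeries.C (N.choose i : S) * (f ^ i * g ^ (N - i)))) := by
    intro i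
    simp only [map_mul, map_pow, map_natCast]
    ring
  simp only [this, map_sum, PowerSeries.coeff_C_mul, PowerSeries.coeff_map,
    Polynomial.finsetSum_coeff, Polynomial.coeff_mul_C, Polynomial.coeff_X_pow]
  simp only [ite_mul, one_mul, zero_mul, sum_ite_eq, mem_range]
  split_ifs with h
  · ring
  · rw [Nat.choose_eq_zero_of_lt (by omega)]; simp

/-- weights -/
noncomputable def wt (s : ℕ) : Polynomial (Polynomial ℤ) :=
  if s = 0 then 1 else if s = 1 then Polynomial.X else Polynomial.C Polynomial.X

lemma wt_prod (l : List ℕ) : (l.map wt).prod =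
    Polynomial.C (Polynomial.X ^ (l.countP (2 ≤ ·))) * Polynomial.X ^ (l.count 1) := by
  induction l with
  | nil => simp
  | cons s l ih =>
    rw [List.map_cons, List.prod_cons, ih, List.countP_cons, List.count_cons]
    rcases s with _ | _ | s
    · simp [wt]
    · simp [wt]; ring
    · simp [wt]; ring

lemma mk_wt : PowerSeries.mk wt = PowerSeries.C (Polynomial.X : Polynomial (Polynomial ℤ)) *
      PowerSeries.map Polynomial.C PowerSeries.X + PowerSeries.map Polynomial.C
        (PowerSeries.C (Polynomial.X : Polynomial ℤ) *
      PowerSeries.map Polynomial.C (PowerSeries.X ^ 2 * PowerSeries.mk 1) +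
        PowerSeries.map Polynomial.C 1) := by
  ext1 n
  rw [PowerSeries.coeff_mk, map_add, PowerSeries.coeff_C_mul, PowerSeries.coeff_map,
    PowerSeries.coeff_map, map_add, PowerSeries.coeff_C_mul, PowerSeries.coeff_map,
    PowerSeries.coeff_map, PowerSeries.coeff_X_pow_mul', PowerSeries.coeff_X, PowerSeries.coeff_one]
  rcases n with _ | _ | n <;> simp [wt]

lemma W_coeff (n a : ℕ) : ((W wt n n).coeff 1).coeff a =
    (((GLs n n).filter (fun l => l.countP (2 ≤ ·) = a ∧ l.count 1 = 1)).card : ℤ) := by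
  unfold W
  rw [Polynomial.finsetSum_coeff, Polynomial.finsetSum_coeff, card_filter]
  push_cast
  refine sum_congr rfl fun l _ => ?_
  rw [wt_prod, Polynomial.coeff_C_mul, Polynomial.coeff_X_pow]
  split_ifs with h1 h2 h2
  · simp [Polynomial.coeff_X_pow, h2.1]
  · rw [mul_one, Polynomial.coeff_X_pow, if_neg]
    intro h; exact h2 ⟨h.symm, h1.symm⟩
  · exact absurd h2.2.symm h1
  · simp

lemma count_lists (n a : ℕ) :
    (((GLs n n).filter (fun l => l.countP (2 ≤ ·) = a ∧ l.count 1 = 1)).card : ℤ) =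
    PowerSeries.coeff n (PowerSeries.X * (PowerSeries.X ^ 2 * PowerSeries.mk 1 : PowerSeries ℤ) ^ a)
       * n.choose a := by
  rw [← W_coeff]
  have h := W_formula wt (by simp [wt]) n n (by omega)
  rw [mk_wt] at h
  have h2 := congrArg (fun r => (r.coeff 1).coeff a) h
  simp only [add_sub_cancel_left, one_mul] at h2
  rw [coeff_extract] at h2
  have e : ((n : Polynomial (Polynomial ℤ)) + 1) = Polynomial.C (Polynomial.C ((n : ℤ) + 1)) := by simp
  rw [e, Polynomial.coeff_C_mul, Polynomial.coeff_C_mul] at h2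
  have e' : (((n + 1).choose 1 : ℕ) : Polynomial ℤ) = Polynomial.C ((n : ℤ) + 1) := by simp
  rw [e', Polynomial.coeff_mul_C, mul_comm] at h2
  have h3 := mul_right_cancel₀ (by positivity) h2
  rw [h3, Nat.add_sub_cancel]
  cases n with
  | zero => simp
  | succ n =>
    rw [pow_one, PowerSeries.coeff_succ_X_mul, PowerSeries.coeff_succ_X_mul, coeff_extract, one_pow, mul_one]

lemma count_final (n m : ℕ) (hm : 1 ≤ m) (h : (n, m) ≠ (1, 1)) :
    (((GLs n n).filter (fun l => l.countP (2 ≤ ·) = m - 1 ∧ l.count 1 = 1)).card : ℤ) =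
    zchoose n ((m : ℤ) - 1) * zchoose ((n : ℤ) - m - 1) ((m : ℤ) - 2) := by
  rw [count_lists, mul_comm]
  obtain ⟨a, rfl⟩ : ∃ a, m = a + 1 := ⟨m - 1, by omega⟩
  have z1 : zchoose n (((a + 1 : ℕ) : ℤ) - 1) = n.choose a := by
    simp [zchoose]
  rw [z1, Nat.add_sub_cancel]
  congr 1
  cases a with
  | zero =>
    have : n ≠ 1 := by rintro rfl; simp at h
    simp [zchoose, PowerSeries.coeff_X, this]
  | succ a =>
    rw [mul_pow, ← pow_mul, ← mul_assoc, ← pow_succ', PowerSeries.mk_one_pow_eq_mk_choose_add,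
      PowerSeries.coeff_X_pow_mul', PowerSeries.coeff_mk]
    unfold zchoose
    split_ifs with h1 h2 h2
    · congr 2 <;> omega
    · omega
    · rw [Nat.choose_eq_zero_of_lt (by omega)]; simp
    · rfl

end S12

namespace S12
open Finset

/-- Noncrossing partition of a finite set. -/
structure NCS (S : Finset ℕ) (π : Finset (Finset ℕ)) : Prop where
  ne : ∀ A ∈ π, A.Nonempty
  dj : ∀ A ∈ π, ∀ B ∈ π, A ≠ B → Disjoint A B
  cov : ∀ x : ℕ, x ∈ S ↔ ∃ A ∈ π, x ∈ A
  nc : ¬ Crossing π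

/-- Minimum of a block. -/
noncomputable def mn (A : Finset ℕ) : ℕ := sInf (A : Set ℕ)

lemma mn_mem {A : Finset ℕ} (h : A.Nonempty) : mn A ∈ A := Nat.sInf_mem (s := (A : Set ℕ)) h

lemma mn_le {A : Finset ℕ} {x : ℕ} (h : x ∈ A) : mn A ≤ x := Nat.sInf_le (s := (A : Set ℕ)) h

/-- The function recording block sizes at block minima. -/
noncomputable def mf (π : Finset (Finset ℕ)) (i : ℕ) : ℕ := ∑ A ∈ π with mn A = i, A.card

variable {S : Finset ℕ} {π : Finset (Finset ℕ)}

lemma NCS.eq_of_mem (h : NCS S π) {A B : Finset ℕ} (hA : A ∈ π) (hB : B ∈ π) {x : ℕ}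
    (h1 : x ∈ A) (h2 : x ∈ B) : A = B := by
  by_contra hne
  exact disjoint_left.1 (h.dj A hA B hB hne) h1 h2

lemma NCS.mn_inj (h : NCS S π) {A B : Finset ℕ} (hA : A ∈ π) (hB : B ∈ π) (e : mn A = mn B) :
    A = B :=
  h.eq_of_mem hA hB (mn_mem (h.ne A hA)) (e ▸ mn_mem (h.ne B hB))

lemma NCS.mf_mn (h : NCS S π) {A : Finset ℕ} (hA : A ∈ π) : mf π (mn A) = A.card := by
  unfold mf
  have : π.filter (fun B => mn B = mn A) = {A} := by
    ext B
    simp only [mem_filter, mem_singleton]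
    constructor
    · rintro ⟨h1, h2⟩; exact h.mn_inj h1 hA h2
    · rintro rfl; exact ⟨hA, rfl⟩
  rw [this, sum_singleton]

lemma exists_of_mf {i : ℕ} (h : mf π i ≠ 0) : ∃ A ∈ π, mn A = i := by
  unfold mf at h
  obtain ⟨A, hA, -⟩ := exists_ne_zero_of_sum_ne_zero h
  simp only [mem_filter] at hA
  exact ⟨A, hA⟩

lemma NCS.mf_zero (h : NCS S π) {i : ℕ} (hi : i ∉ S) : mf π i = 0 := by
  by_contra hne
  obtain ⟨A, hA, rfl⟩ := exists_of_mf hne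
  exact hi ((h.cov _).2 ⟨A, hA, mn_mem (h.ne A hA)⟩)

lemma NCS.sum_ge (h : NCS S π) (x : ℕ) :
    ∑ i ∈ S with x ≤ i, mf π i = ∑ A ∈ π with x ≤ mn A, A.card := by
  rw [← sum_fiberwise_of_maps_to (s := π.filter (fun A => x ≤ mn A))
    (t := S.filter (fun i => x ≤ i)) (g := mn)]
  · refine sum_congr rfl fun i hi => ?_
    unfold mf
    rw [filter_filter]
    refine sum_congr ?_ fun _ _ => rfl
    ext A
    simp only [mem_filter] at hi ⊢
    constructor
    · rintro ⟨h1, h2⟩; exact ⟨h1, h2 ▸ hi.2, h2⟩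
    · rintro ⟨h1, h2, h3⟩; exact ⟨h1, h3⟩
  · intro A hA
    simp only [mem_filter] at hA ⊢
    exact ⟨(h.cov _).2 ⟨A, hA.1, mn_mem (h.ne A hA.1)⟩, hA.2⟩

lemma NCS.ballot (h : NCS S π) (x : ℕ) :
    ∑ i ∈ S with x ≤ i, mf π i ≤ (S.filter (fun i => x ≤ i)).card := by
  rw [h.sum_ge]
  have := card_biUnion (s := π.filter (fun A => x ≤ mn A)) (t := fun A => A) (by
    intro A hA B hB hne
    exact h.dj A (mem_filter.1 (mem_coe.1 hA)).1 B (mem_filter.1 (mem_coe.1 hB)).1 hne)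
  rw [← this]
  apply card_le_card
  intro y hy
  simp only [mem_biUnion, mem_filter] at hy ⊢
  obtain ⟨A, ⟨h1, h2⟩, h3⟩ := hy
  exact ⟨(h.cov _).2 ⟨A, h1, h3⟩, h2.trans (mn_le h3)⟩

lemma NCS.sum_all (h : NCS S π) : ∑ i ∈ S, mf π i = S.card := by
  have h0 := h.sum_ge 0
  simp only [Nat.zero_le, filter_true] at h0
  rw [h0, ← card_biUnion (s := π) (t := fun A => A) h.dj]
  congr 1
  ext y
  simp only [mem_biUnion]
  exact (h.cov y).symm

/-- Initial segments. -/
lemma exists_init (U : Finset ℕ) (s : ℕ) (hs : s ≤ U.card) :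
    ∃ B ⊆ U, B.card = s ∧ ∀ x ∈ U, ∀ y ∈ B, x < y → x ∈ B := by
  induction s with
  | zero => exact ⟨∅, by simp, rfl, by simp⟩
  | succ s ih =>
    obtain ⟨B, h1, h2, h3⟩ := ih (by omega)
    have hne : (U \ B).Nonempty := by
      rw [← card_pos, card_sdiff_of_subset h1]; omega
    have hm := mn_mem hne
    simp only [mem_sdiff] at hm
    refine ⟨insert (mn (U \ B)) B, ?_, ?_, ?_⟩
    · exact insert_subset hm.1 h1
    · rw [card_insert_of_notMem hm.2, h2]
    · intro x hx y hy hxy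
      rw [mem_insert] at hy ⊢
      rcases hy with rfl | hy
      · right
        by_contra hxB
        have := mn_le (mem_sdiff.2 ⟨hx, hxB⟩)
        omega
      · right; exact h3 x hx y hy hxy

lemma init_unique {U A B : Finset ℕ} (hA : A ⊆ U) (hB : B ⊆ U) (hc : A.card = B.card)
    (iA : ∀ x ∈ U, ∀ y ∈ A, x < y → x ∈ A) (iB : ∀ x ∈ U, ∀ y ∈ B, x < y → x ∈ B) : A = B := by
  by_cases h : A ⊆ B
  · exact eq_of_subset_of_card_le h hc.ge
  · obtain ⟨a, ha, hab⟩ := not_subset.1 h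
    symm
    apply eq_of_subset_of_card_le _ hc.le
    intro b hb
    rcases lt_trichotomy a b with h' | h' | h'
    · exact absurd (iB a (hA ha) b hb h') hab
    · subst h'; exact ha
    · exact iA b (hB hb) a ha h'

lemma mf_insert {B : Finset ℕ} (hB : B ∉ π) (i : ℕ) :
    mf (insert B π) i = (if mn B = i then B.card else 0) + mf π i := by
  unfold mf
  rw [sum_filter, sum_insert hB, sum_filter]

/-- The main encoding theorem. -/
theorem encode (N : ℕ) (S : Finset ℕ) (hN : S.card ≤ N) (b : ℕ → ℕ) (hb : ∀ i, i ∉ S → b i = 0)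
    (hbal : ∀ x, ∑ i ∈ S with x ≤ i, b i ≤ (S.filter (fun i => x ≤ i)).card)
    (hsum : ∑ i ∈ S, b i = S.card) : ∃! π, NCS S π ∧ mf π = b := by
  induction N generalizing S b with
  | zero =>
    have hS : S = ∅ := by rw [← card_eq_zero]; omega
    subst hS
    refine ⟨∅, ⟨⟨by simp, by simp, by simp, ?_⟩, ?_⟩, ?_⟩
    · rintro ⟨A, hA, -⟩; simp at hA
    · funext i; rw [hb i (by simp)]; simp [mf]
    · rintro π ⟨h, -⟩
      rw [eq_empty_iff_forall_notMem]
      intro A hA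
      obtain ⟨x, hx⟩ := h.ne A hA
      have := (h.cov x).2 ⟨A, hA, hx⟩
      simp at this
  | succ N ih =>
    by_cases hS : S = ∅
    · exact ih S (by simp [hS]) b hb hbal hsum
    -- the largest minimum
    have hsupp : (S.filter (fun i => b i ≠ 0)).Nonempty := by
      by_contra hne
      rw [not_nonempty_iff_eq_empty, filter_eq_empty_iff] at hne
      rw [sum_eq_zero (fun i hi => not_not.1 (hne hi))] at hsum
      exact hS (card_eq_zero.1 hsum.symm)
    obtain ⟨i, hi, hmax⟩ := exists_max_image _ id hsupp
    simp only [mem_filter, id] at hi hmax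
    have hmax' : ∀ j, b j ≠ 0 → j ≤ i := by
      intro j hj
      refine hmax j ⟨?_, hj⟩
      by_contra h; exact hj (hb j h)
    set U := S.filter (fun j => i ≤ j) with hU
    have hsU : b i ≤ U.card := by
      refine le_trans ?_ (hbal i)
      exact single_le_sum (f := b) (fun _ _ => Nat.zero_le _) (mem_filter.2 ⟨hi.1, le_rfl⟩)
    obtain ⟨B, hBU, hBc, hBi⟩ := exists_init U (b i) hsU
    have hBS : B ⊆ S := hBU.trans (filter_subset _ _)
    have hBge : ∀ x ∈ B, i ≤ x := fun x hx => (mem_filter.1 (hBU hx)).2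
    have hBne : B.Nonempty := by rw [← card_pos]; omega
    have hiB : i ∈ B := by
      obtain ⟨y, hy⟩ := hBne
      rcases (hBge y hy).eq_or_lt with h | h
      · rw [h]; exact hy
      · exact hBi i (mem_filter.2 ⟨hi.1, le_rfl⟩) y hy h
    have hmnB : mn B = i := le_antisymm (mn_le hiB) (hBge _ (mn_mem hBne))
    set b' := Function.update b i 0 with hb'
    have hb'i : b' i = 0 := by simp [hb']
    have hb'ne : ∀ j, j ≠ i → b' j = b j := fun j hj => by simp [hb', hj]
    have hb'ge : ∀ j, i ≤ j → b' j = 0 := by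
      intro j hj
      by_cases h : j = i
      · rw [h, hb'i]
      · rw [hb'ne j h]; by_contra h'; have := hmax' j h'; omega
    have hcard : (S \ B).card = S.card - b i := by rw [card_sdiff_of_subset hBS, hBc]
    have hble : b i ≤ S.card := hBc ▸ card_le_card hBS
    -- sums
    have hsums : ∀ x, x ≤ i → ∑ j ∈ S \ B with x ≤ j, b' j + b i = ∑ j ∈ S with x ≤ j, b j := by
      intro x hx
      have e1 : ∑ j ∈ S \ B with x ≤ j, b' j = ∑ j ∈ S with x ≤ j, b' j := by
        apply sum_subset (filter_subset_filter _ sdiff_subset)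
        intro j hj hj'
        simp only [mem_filter, mem_sdiff, not_and] at hj hj'
        apply hb'ge
        apply hBge
        by_contra h
        exact hj' ⟨hj.1, h⟩ hj.2
      have hmem : i ∈ S.filter (fun j => x ≤ j) := mem_filter.2 ⟨hi.1, hx⟩
      rw [e1, ← add_sum_erase _ _ hmem, ← add_sum_erase _ b hmem, hb'i, zero_add, add_comm]
      congr 1
      exact sum_congr rfl fun j hj => hb'ne j (ne_of_mem_erase hj)
    have hcards : ∀ x, x ≤ i → ((S \ B).filter (fun j => x ≤ j)).card + b i =
        (S.filter (fun j => x ≤ j)).card := by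
      intro x hx
      rw [← hBc]
      have : (S \ B).filter (fun j => x ≤ j) = S.filter (fun j => x ≤ j) \ B := by
        ext y; simp only [mem_filter, mem_sdiff]; tauto
      rw [this]
      apply card_sdiff_add_card_eq_card
      intro y hy
      exact mem_filter.2 ⟨hBS hy, hx.trans (hBge y hy)⟩
    obtain ⟨π', ⟨hπ', hmf'⟩, huniq⟩ := ih (S \ B) (by omega) b' (by
        intro j hj
        by_cases h : j = i
        · rw [h, hb'i]
        · rw [hb'ne j h]
          by_contra hne
          have hjS : j ∈ S := by by_contra hjS; exact hne (hb j hjS)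
          have hjB : j ∈ B := by
            by_contra hjB; exact hj (mem_sdiff.2 ⟨hjS, hjB⟩)
          exact h (le_antisymm (hmax' j hne) (hBge j hjB))) (by
        intro x
        rcases le_or_gt x i with hx | hx
        · have h1 := hsums x hx
          have h2 := hcards x hx
          have h3 := hbal x
          omega
        · rw [sum_eq_zero]
          · exact Nat.zero_le _
          · intro j hj
            apply hb'ge
            have := (mem_filter.1 hj).2
            omega) (by
        have h1 := hsums 0 (Nat.zero_le _)
        simp only [Nat.zero_le, filter_true] at h1
        omega)
    have hBπ' : B ∉ π' := by
      intro h
      have := (hπ'.cov i).2 ⟨B, h, hiB⟩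
      exact (mem_sdiff.1 this).2 hiB
    have hdisj : ∀ A ∈ π', Disjoint A B := by
      intro A hA
      rw [disjoint_left]
      intro x hx
      exact (mem_sdiff.1 ((hπ'.cov x).2 ⟨A, hA, hx⟩)).2
    have hπS : ∀ A ∈ π', ∀ x ∈ A, x ∈ S := fun A hA x hx =>
      (mem_sdiff.1 ((hπ'.cov x).2 ⟨A, hA, hx⟩)).1
    -- anything in `S` strictly between two elements of `B` is in `B`
    have hconv : ∀ x ∈ S, ∀ y ∈ B, ∀ z ∈ B, y < x → x < z → x ∈ B := by
      intro x hx y hy z hz h1 h2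
      refine hBi x (mem_filter.2 ⟨hx, ?_⟩) z hz h2
      have := hBge y hy
      omega
    refine ⟨insert B π', ⟨⟨?_, ?_, ?_, ?_⟩, ?_⟩, ?_⟩
    · intro A hA
      rcases mem_insert.1 hA with rfl | hA
      · exact hBne
      · exact hπ'.ne A hA
    · intro A hA C hC hne
      rcases mem_insert.1 hA with rfl | hA' <;> rcases mem_insert.1 hC with rfl | hC
      · exact absurd rfl hne
      · exact (hdisj C hC).symm
      · exact hdisj A hA'
      · exact hπ'.dj A hA' C hC hne
    · intro x
      simp only [mem_insert, exists_eq_or_imp]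
      rw [← hπ'.cov x, mem_sdiff]
      constructor
      · intro hx; by_cases h : x ∈ B
        · exact Or.inl h
        · exact Or.inr ⟨hx, h⟩
      · rintro (h | h)
        · exact hBS h
        · exact h.1
    · rintro ⟨A, hA, C, hC, hne, p, hp, q, hq, r, hr, t, ht, h1, h2, h3⟩
      rcases mem_insert.1 hA with rfl | hA' <;> rcases mem_insert.1 hC with rfl | hC
      · exact hne rfl
      · exact disjoint_left.1 (hdisj C hC) hr (hconv r (hπS C hC r hr) p hp q hq h1 h2)
      · exact disjoint_left.1 (hdisj A hA') hq (hconv q (hπS A hA' q hq) r hr t ht h2 h3)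
      · exact hπ'.nc ⟨A, hA', C, hC, hne, p, hp, q, hq, r, hr, t, ht, h1, h2, h3⟩
    · funext j
      rw [mf_insert hBπ', hmf', hmnB, hBc]
      by_cases h : i = j
      · subst h; simp [hb'i]
      · rw [if_neg h, hb'ne j (Ne.symm h), zero_add]
    · rintro π ⟨hπ, hmf⟩
      obtain ⟨A, hA, hmnA⟩ := exists_of_mf (π := π) (i := i) (by rw [hmf]; exact hi.2)
      have hAc : A.card = b i := by rw [← hπ.mf_mn hA, hmnA, hmf]
      have hiA : i ∈ A := hmnA ▸ mn_mem (hπ.ne A hA)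
      have hAB : A = B := by
        refine init_unique (U := U) ?_ hBU (hAc.trans hBc.symm) ?_ hBi
        · intro x hx
          exact mem_filter.2 ⟨(hπ.cov x).2 ⟨A, hA, hx⟩, hmnA ▸ mn_le hx⟩
        · intro x hx y hy hxy
          obtain ⟨hxS, hix⟩ := mem_filter.1 hx
          by_contra hxA
          obtain ⟨C, hC, hxC⟩ := (hπ.cov x).1 hxS
          have hne : C ≠ A := by rintro rfl; exact hxA hxC
          have hCi : mn C ≤ i := by
            apply hmax'
            rw [← hmf, hπ.mf_mn hC]
            exact (card_pos.2 (hπ.ne C hC)).ne'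
          have hCi' : mn C ≠ i := by
            intro h; exact hne (hπ.mn_inj hC hA (h.trans hmnA.symm))
          have hxi : x ≠ i := by rintro rfl; exact hxA hiA
          exact hπ.nc ⟨C, hC, A, hA, hne, mn C, mn_mem (hπ.ne C hC), x, hxC, i, hiA, y, hy,
            by omega, by omega, hxy⟩
      subst hAB
      have hins : insert A (π.erase A) = π := insert_erase hA
      rw [← hins]
      congr 1
      apply huniq
      refine ⟨⟨?_, ?_, ?_, ?_⟩, ?_⟩
      · intro C hC; exact hπ.ne C (mem_of_mem_erase hC)
      · intro C hC D hD; exact hπ.dj C (mem_of_mem_erase hC) D (mem_of_mem_erase hD)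
      · intro x
        rw [mem_sdiff, hπ.cov x]
        constructor
        · rintro ⟨⟨C, hC, hx⟩, hxA⟩
          exact ⟨C, mem_erase.2 ⟨by rintro rfl; exact hxA hx, hC⟩, hx⟩
        · rintro ⟨C, hC, hx⟩
          obtain ⟨h1, h2⟩ := mem_erase.1 hC
          exact ⟨⟨C, h2, hx⟩, fun hxA => h1 (hπ.eq_of_mem h2 hA hx hxA)⟩
      · rintro ⟨C, hC, D, hD, h⟩
        exact hπ.nc ⟨C, mem_of_mem_erase hC, D, mem_of_mem_erase hD, h⟩
      · funext j
        have := mf_insert (π := π.erase A) (B := A) (by simp) j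
        rw [hins, hmf, hmnB, hBc] at this
        by_cases h : i = j
        · subst h; simp at this; rw [this, hb'i]
        · rw [if_neg h, zero_add] at this
          rw [hb'ne j (Ne.symm h), this]

end S12

namespace S12
open Finset

lemma sum_map (b : ℕ → ℕ) (a k : ℕ) :
    ((List.range' a k).map b).sum = ∑ i ∈ Ico a (a + k), b i := by
  induction k generalizing a with
  | zero => simp
  | succ k ih =>
    rw [List.range'_succ, List.map_cons, List.sum_cons, ih,
      sum_eq_sum_Ico_succ_bot (by omega : a < a + (k + 1))]
    congr 3; omega

lemma countP_map (b : ℕ → ℕ) (p : ℕ → Prop) [DecidablePred p] (a k : ℕ) :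
    ((List.range' a k).map b).countP p = ((Ico a (a + k)).filter (fun i => p (b i))).card := by
  rw [card_filter]
  induction k generalizing a with
  | zero => simp
  | succ k ih =>
    rw [List.range'_succ, List.map_cons, List.countP_cons, ih,
      sum_eq_sum_Ico_succ_bot (by omega : a < a + (k + 1)), add_comm]
    have : a + 1 + k = a + (k + 1) := by omega
    rw [this]
    simp

lemma good_map (b : ℕ → ℕ) (a k : ℕ) : Good ((List.range' a k).map b) ↔
    ∀ x, a ≤ x → ∑ i ∈ Ico x (a + k), b i ≤ a + k - x := by
  induction k generalizing a with
  | zero =>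
    simp only [List.range'_zero, List.map_nil, Good, true_iff]
    intro x hx
    rw [Ico_eq_empty (by omega)]; simp
  | succ k ih =>
    rw [List.range'_succ, List.map_cons, Good, ih, sum_map, List.length_map, List.length_range']
    have e : a + 1 + k = a + (k + 1) := by omega
    have e2 := sum_eq_sum_Ico_succ_bot (by omega : a < a + (k + 1)) b
    rw [e, ← e2]
    constructor
    · rintro ⟨h1, h2⟩ x hx
      rcases hx.eq_or_lt with rfl | hx
      · omega
      · exact h2 x hx
    · intro h
      refine ⟨?_, fun x hx => h x (by omega)⟩
      have := h a le_rfl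
      omega

lemma NCS.card_filter_mf {S : Finset ℕ} {π : Finset (Finset ℕ)} (h : NCS S π) (p : ℕ → Prop)
    [DecidablePred p] (hp : ¬ p 0) :
    (S.filter (fun i => p (mf π i))).card = (π.filter (fun A => p A.card)).card := by
  have : S.filter (fun i => p (mf π i)) = (π.filter (fun A => p A.card)).image mn := by
    ext i
    simp only [mem_filter, mem_image]
    constructor
    · rintro ⟨h1, h2⟩
      obtain ⟨A, hA, rfl⟩ := exists_of_mf (π := π) (i := i) (fun h0 => hp (h0 ▸ h2))
      exact ⟨A, ⟨hA, h.mf_mn hA ▸ h2⟩, rfl⟩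
    · rintro ⟨A, ⟨hA, h2⟩, rfl⟩
      exact ⟨(h.cov _).2 ⟨A, hA, mn_mem (h.ne A hA)⟩, by rw [h.mf_mn hA]; exact h2⟩
  rw [this, card_image_of_injOn]
  intro A hA B hB e
  exact h.mn_inj (mem_filter.1 (mem_coe.1 hA)).1 (mem_filter.1 (mem_coe.1 hB)).1 e

lemma ncs_iff (n : ℕ) (π : Finset (Finset ℕ)) : IsNCPartition n π ↔ NCS (Ico 1 (1 + n)) π := by
  have e : Icc 1 n = Ico 1 (1 + n) := by ext; simp; omega
  unfold IsNCPartition IsPartitionOf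
  rw [e]
  exact ⟨fun ⟨⟨a, b, c⟩, d⟩ => ⟨a, b, c, d⟩, fun ⟨a, b, c, d⟩ => ⟨⟨a, b, c⟩, d⟩⟩

lemma filter_Ico_ge (n x : ℕ) (hx : 1 ≤ x) :
    (Ico 1 (1 + n)).filter (fun i => x ≤ i) = Ico x (1 + n) := by
  ext; simp; omega

lemma card_split (π : Finset (Finset ℕ)) (h : ∀ A ∈ π, A.Nonempty) :
    π.card = (π.filter (fun A => A.card = 1)).card + (π.filter (fun A => 2 ≤ A.card)).card := by
  rw [← card_filter_add_card_filter_not (s := π) (fun A => A.card = 1)]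
  congr 2
  refine filter_congr fun A hA => ?_
  have := card_pos.2 (h A hA)
  omega

lemma NCcount_eq (n m : ℕ) (hm : 1 ≤ m) : NCcount n m 1 =
    ((GLs n n).filter (fun l => l.countP (2 ≤ ·) = m - 1 ∧ l.count 1 = 1)).card := by
  unfold NCcount
  rw [← Set.ncard_coe_finset]
  have cnt : ∀ π, NCS (Ico 1 (1 + n)) π → 
      ((List.range' 1 n).map (mf π)).countP (2 ≤ ·) = (π.filter (fun A => 2 ≤ A.card)).card ∧
      ((List.range' 1 n).map (mf π)).count 1 = (π.filter (fun A => A.card = 1)).card := by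
    intro π h
    constructor
    · rw [countP_map _ (fun s => 2 ≤ s), h.card_filter_mf (fun s => 2 ≤ s) (by omega)]
    · rw [← h.card_filter_mf (fun s => s = 1) (by omega), ← countP_map _ (fun s => s = 1), List.count]
      congr 1
  have mem : ∀ π, NCS (Ico 1 (1 + n)) π → (List.range' 1 n).map (mf π) ∈ GLs n n := by
    intro π h
    rw [mem_GLs]
    refine ⟨by simp, ?_, ?_⟩
    · rw [sum_map, h.sum_all]; simp
    · rw [good_map]
      intro x hx
      have := h.ballot x
      rw [filter_Ico_ge _ _ hx] at this
      simpa using this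
  apply Set.ncard_congr (fun π _ => (List.range' 1 n).map (mf π))
  · rintro π ⟨h1, h2, h3⟩
    rw [ncs_iff] at h1
    rw [mem_coe, mem_filter]
    refine ⟨mem π h1, ?_⟩
    obtain ⟨c1, c2⟩ := cnt π h1
    have := card_split π h1.ne
    constructor
    · rw [c1]; omega
    · rw [c2, h3]
  · rintro π π' ⟨h1, -⟩ ⟨h2, -⟩ e
    rw [ncs_iff] at h1 h2
    have hf : mf π' = mf π := by
      funext i
      by_cases hi : i ∈ Ico 1 (1 + n)
      · rw [List.map_inj_left] at e
        refine (e i ?_).symm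
        rw [List.mem_range'_1]
        simpa using hi
      · rw [h1.mf_zero hi, h2.mf_zero hi]
    obtain ⟨_, _, hu⟩ := encode _ (Ico 1 (1 + n)) le_rfl (mf π) (fun i hi => h1.mf_zero hi)
      h1.ballot h1.sum_all
    rw [hu π ⟨h1, rfl⟩, hu π' ⟨h2, hf⟩]
  · intro l hl
    rw [mem_coe, mem_filter] at hl
    obtain ⟨hl, hc1, hc2⟩ := hl
    rw [mem_GLs] at hl
    obtain ⟨hlen, hsum, hgood⟩ := hl
    set b : ℕ → ℕ := fun i => if i ∈ Ico 1 (1 + n) then l.getD (i - 1) 0 else 0 with hb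
    have hbl : (List.range' 1 n).map b = l := by
      apply List.ext_getElem
      · simp [hlen]
      · intro i h1 h2
        have : i < n := by omega
        simp [hb, h2, add_comm 1 i]
        omega
    have hS : ∑ i ∈ Ico 1 (1 + n), b i = (Ico 1 (1 + n)).card := by
      rw [← sum_map, hbl, hsum]; simp
    obtain ⟨π, ⟨h1, h2⟩, -⟩ := encode _ (Ico 1 (1 + n)) le_rfl b (fun i hi => by simp only [hb]; rw [if_neg hi])
      (by
        have key : ∀ x, 1 ≤ x → ∑ i ∈ Ico 1 (1 + n) with x ≤ i, b i ≤
            ((Ico 1 (1 + n)).filter (fun i => x ≤ i)).card := by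
          intro x hx
          rw [← hbl, good_map] at hgood
          rw [filter_Ico_ge _ _ hx]
          simpa using hgood x hx
        intro x
        rcases Nat.eq_zero_or_pos x with rfl | hx
        · simp only [Nat.zero_le, filter_true]
          exact hS.le
        · exact key x hx) hS
    obtain ⟨c1, c2⟩ := cnt π h1
    rw [h2, hbl] at c1 c2
    refine ⟨π, ⟨(ncs_iff _ _).2 h1, ?_, ?_⟩, ?_⟩
    · have := card_split π h1.ne
      omega
    · omega
    · rw [h2, hbl]

end S12

theorem stmt12 (n m : ℕ) (h : (n, m) ≠ (1, 1)) :
    (NCcount n m 1 : ℤ) = zchoose n ((m : ℤ) - 1) * zchoose ((n : ℤ) - m - 1) ((m : ℤ) - 2) := by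
  rcases Nat.eq_zero_or_pos m with rfl | hm
  · have : {π : Finset (Finset ℕ) | IsNCPartition n π ∧ π.card = 0 ∧
        (π.filter fun A => A.card = 1).card = 1} = ∅ := by
      ext π
      simp only [Set.mem_ofPred_eq, Set.mem_empty_iff_false, iff_false]
      rintro ⟨-, h1, h2⟩
      have := Finset.card_filter_le π (fun A => A.card = 1)
      omega
    unfold NCcount
    rw [this]
    simp [zchoose]
  · rw [S12.NCcount_eq n m hm, S12.count_final n m hm h]
end
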